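/- Let (U, φ) be a finite standard closure space with modular closure lattice, and let C be a non-join-irreducible essential closed set with predecessors C_1, …, C_m and C_* = ⋂_{i=1}^m C_i. Then a pseudo-closed set of the form P = C_i ∪ C_j spanning C is faulty (i.e., the closure of P under the E-base is strictly contained in C) if and only if there exists an index k with C_k ∉ {C_i, C_j} and |C_k \ C_*| > 1. -/

import Mathlib

namespace EBaseFormal

open Set

variable {α : Type*}

/-- `φ` is a closure operator on subsets of `α`. -/
def IsClosureOp (φ : Set α → Set α) : Prop :=
  (∀ X, X ⊆ φ X) ∧ (∀ X, φ (φ X) = φ X) ∧ ∀ X Y : Set α, X ⊆ Y → φ X ⊆ φ Y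

/-- `C` is a closed set of the closure space. -/
def IsClosedSet (φ : Set α → Set α) (C : Set α) : Prop :=
  φ C = C

/-- The closure space is standard: `φ {x} \ {x}` is closed for every `x`. -/
def IsStandard (φ : Set α → Set α) : Prop :=
  ∀ x : α, IsClosedSet φ (φ {x} \ {x})

/-- The binary part `φ^b` of the closure operator. -/
def binPart (φ : Set α → Set α) (X : Set α) : Set α :=
  ⋃ x ∈ X, φ {x}

/-- `A` is a D-generator of `x`. -/
def IsDGen (φ : Set α → Set α) (x : α) (A : Set α) : Prop :=
  x ∈ φ A ∧ x ∉ binPart φ A ∧ ∀ B : Set α, binPart φ B ⊂ binPart φ A → x ∉ φ B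

/-- `A` is an E-generator of `x`: a D-generator whose closure is inclusion-minimal
among the closures of D-generators of `x`. -/
def IsEGen (φ : Set α → Set α) (x : α) (A : Set α) : Prop :=
  IsDGen φ x A ∧ ∀ B : Set α, IsDGen φ x B → φ B ⊆ φ A → φ B = φ A

/-- The E-base of the closure space: all valid nontrivial binary implications
together with the implications `A → {x}` for `A` an E-generator of `x`. -/
def EBase (φ : Set α → Set α) : Set (Set α × Set α) :=
  {p | ∃ a x : α, p = ({a}, {x}) ∧ x ∈ φ {a} ∧ x ≠ a} ∪
    {p | ∃ (x : α) (A : Set α), p = (A, {x}) ∧ IsEGen φ x A}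

/-- `Y` satisfies all implications of `S`. -/
def ImpClosedSet (S : Set (Set α × Set α)) (Y : Set α) : Prop :=
  ∀ p ∈ S, p.1 ⊆ Y → p.2 ⊆ Y

/-- The closure of `Z` under the implications in `S`: the smallest set containing
`Z` satisfying all implications of `S`. -/
def ImpClosure (S : Set (Set α × Set α)) (Z : Set α) : Set α :=
  ⋂₀ {Y : Set α | Z ⊆ Y ∧ ImpClosedSet S Y}

/-- The E-base is valid: its induced closure operator is `φ`. -/
def EBaseValid (φ : Set α → Set α) : Prop :=
  ∀ Z : Set α, ImpClosure (EBase φ) Z = φ Z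

/-- `Q` is quasi-closed. -/
def QuasiClosed (φ : Set α → Set α) (Q : Set α) : Prop :=
  ∀ X ⊆ Q, φ X ⊂ φ Q → φ X ⊆ Q

/-- `P` is pseudo-closed: non-closed and inclusion-minimal among the quasi-closed
sets spanning `φ P`. -/
def PseudoClosed (φ : Set α → Set α) (P : Set α) : Prop :=
  ¬ IsClosedSet φ P ∧ QuasiClosed φ P ∧
    ∀ Q : Set α, QuasiClosed φ Q → φ Q = φ P → Q ⊆ P → Q = P

/-- `C` is an essential closed set. -/
def Essential (φ : Set α → Set α) (C : Set α) : Prop :=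
  IsClosedSet φ C ∧ ∃ P : Set α, PseudoClosed φ P ∧ φ P = C

/-- The canonical (Duquenne–Guigues) base. -/
def DGBase (φ : Set α → Set α) : Set (Set α × Set α) :=
  {p | ∃ P : Set α, PseudoClosed φ P ∧ p = (P, φ P \ P)}

/-- `C'` is a predecessor (lower cover) of `C` in the closure lattice. -/
def Predecessor (φ : Set α → Set α) (C' C : Set α) : Prop :=
  IsClosedSet φ C' ∧ IsClosedSet φ C ∧ C' ⊂ C ∧
    ∀ C'' : Set α, IsClosedSet φ C'' → C' ⊂ C'' → C'' ⊆ C → C'' = C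

/-- The closure lattice is join-semidistributive. -/
def JoinSemidistrib (φ : Set α → Set α) : Prop :=
  ∀ C1 C2 C3 : Set α, IsClosedSet φ C1 → IsClosedSet φ C2 → IsClosedSet φ C3 →
    φ (C1 ∪ C2) = φ (C1 ∪ C3) → φ (C1 ∪ C2) = φ (C1 ∪ C2 ∩ C3)

/-- The closure lattice is meet-semidistributive. -/
def MeetSemidistrib (φ : Set α → Set α) : Prop :=
  ∀ C1 C2 C3 : Set α, IsClosedSet φ C1 → IsClosedSet φ C2 → IsClosedSet φ C3 →
    C1 ∩ C2 = C1 ∩ C3 → C1 ∩ C2 = C1 ∩ φ (C2 ∪ C3)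

/-- The closure lattice is semidistributive. -/
def Semidistrib (φ : Set α → Set α) : Prop :=
  JoinSemidistrib φ ∧ MeetSemidistrib φ

/-- The closure lattice is modular: `a ≤ b → (b ∧ c) ∨ a = b ∧ (c ∨ a)`. -/
def ModularLattice (φ : Set α → Set α) : Prop :=
  ∀ A B C : Set α, IsClosedSet φ A → IsClosedSet φ B → IsClosedSet φ C →
    A ⊆ B → φ (B ∩ C ∪ A) = B ∩ φ (C ∪ A)

/-- The closure lattice is atomistic (in a standard space). -/
def Atomistic (φ : Set α → Set α) : Prop :=
  ∀ x : α, φ {x} = ({x} : Set α)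

/-- The closure lattice is upper-semimodular. -/
def UpperSemimodular (φ : Set α → Set α) : Prop :=
  ∀ C1 C2 : Set α, IsClosedSet φ C1 → IsClosedSet φ C2 →
    Predecessor φ (C1 ∩ C2) C1 → Predecessor φ C2 (φ (C1 ∪ C2))

/-- The closure lattice is geometric: atomistic and upper-semimodular. -/
def Geometric (φ : Set α → Set α) : Prop :=
  Atomistic φ ∧ UpperSemimodular φ

/-- `x` is prime in the lattice `(↓C, ⊆)` of closed subsets of `C`. -/
def PrimeIn (φ : Set α → Set α) (C : Set α) (x : α) : Prop :=
  ∀ C1 C2 : Set α, IsClosedSet φ C1 → IsClosedSet φ C2 → C1 ⊆ C → C2 ⊆ C →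
    φ {x} ⊆ φ (C1 ∪ C2) → φ {x} ⊆ C1 ∨ φ {x} ⊆ C2

/-- `x ∈ C` is almost prime in `(↓C, ⊆)`. -/
def AlmostPrimeIn (φ : Set α → Set α) (C : Set α) (x : α) : Prop :=
  x ∈ C ∧ ¬ PrimeIn φ C x ∧
    ∀ C' : Set α, Predecessor φ C' C → x ∈ C' → PrimeIn φ C' x

/-- `A` is a `φ^b`-minimal spanning set of the closed set `C`. -/
def BMinSpanning (φ : Set α → Set α) (C A : Set α) : Prop :=
  φ A = C ∧ ∀ B : Set α, binPart φ B ⊂ binPart φ A → φ B ≠ C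

/-- `C` is join-irreducible: nonempty and whenever it is a join of two closed sets
it equals one of them. -/
def JoinIrred (φ : Set α → Set α) (C : Set α) : Prop :=
  IsClosedSet φ C ∧ C ≠ ∅ ∧
    ∀ C1 C2 : Set α, IsClosedSet φ C1 → IsClosedSet φ C2 →
      C = φ (C1 ∪ C2) → C = C1 ∨ C = C2

/-- `C` is join-irreducible: nonempty with a unique predecessor. -/
def JoinIrredUP (φ : Set α → Set α) (C : Set α) : Prop :=
  IsClosedSet φ C ∧ C ≠ ∅ ∧ ∃! C' : Set α, Predecessor φ C' C

section Helpers

variable {φ : Set α → Set α}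

theorem aux_sub (hφ : IsClosureOp φ) (X : Set α) : X ⊆ φ X := hφ.1 X

theorem aux_le (hφ : IsClosureOp φ) {X D : Set α} (hD : IsClosedSet φ D) (h : X ⊆ D) :
    φ X ⊆ D := by
  have := hφ.2.2 X D h
  rwa [hD] at this

theorem aux_cl (hφ : IsClosureOp φ) (X : Set α) : IsClosedSet φ (φ X) := hφ.2.1 X

theorem aux_inter (hφ : IsClosureOp φ) {X Y : Set α} (hX : IsClosedSet φ X)
    (hY : IsClosedSet φ Y) : IsClosedSet φ (X ∩ Y) :=
  Subset.antisymm (subset_inter (aux_le hφ hX inter_subset_left)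
    (aux_le hφ hY inter_subset_right)) (aux_sub hφ _)

theorem aux_single (hφ : IsClosureOp φ) {D : Set α} (hD : IsClosedSet φ D) {x : α}
    (h : x ∈ D) : φ {x} ⊆ D := aux_le hφ hD (singleton_subset_iff.2 h)

theorem aux_bin_sub (hφ : IsClosureOp φ) (X : Set α) : X ⊆ binPart φ X := by
  intro x hx
  exact mem_biUnion hx (aux_sub hφ _ rfl)

/-- join of a predecessor with a set it does not contain -/
theorem aux_join (hφ : IsClosureOp φ) {C K X : Set α} (hK : Predecessor φ K C)
    (hX : X ⊆ C) (h : ¬ X ⊆ K) : φ (K ∪ X) = C := by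
  apply hK.2.2.2 _ (aux_cl hφ _)
  · refine ⟨subset_union_left.trans (aux_sub hφ _), fun h' => h ?_⟩
    exact (subset_union_right.trans (aux_sub hφ _)).trans h'
  · exact aux_le hφ hK.2.1 (union_subset hK.2.2.1.1 hX)

theorem aux_pred_eq {C K L : Set α} (hK : Predecessor φ K C) (hL : Predecessor φ L C)
    (h : K ⊆ L) : K = L := by
  by_contra hne
  have := hK.2.2.2 L hL.1 (h.ssubset_of_ne hne) hL.2.2.1.1
  exact hL.2.2.1.ne this

theorem aux_cover (hφ : IsClosureOp φ) (hmod : ModularLattice φ) {C K L E : Set α}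
    (hK : Predecessor φ K C) (hL : Predecessor φ L C) (hE : IsClosedSet φ E)
    (h1 : K ∩ L ⊆ E) (h2 : E ⊆ K) : E = K ∩ L ∨ E = K := by
  by_cases h : E ⊆ L
  · left; exact Subset.antisymm (subset_inter h2 h) h1
  · right
    have h3 := hmod E K L hE hK.1 hL.1 h2
    rw [aux_join hφ hL (h2.trans hK.2.2.1.1) h, inter_eq_self_of_subset_left hK.2.2.1.1,
      union_eq_self_of_subset_left h1, hE] at h3
    exact h3

theorem aux_exists_pred [Finite α] {C : Set α} (hC : IsClosedSet φ C) {X : Set α}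
    (hX : IsClosedSet φ X) (h : X ⊂ C) : ∃ K, Predecessor φ K C ∧ X ⊆ K := by
  obtain ⟨K, ⟨hK1, hK2, hK3⟩, hm⟩ := (Set.toFinite
    {K : Set α | IsClosedSet φ K ∧ K ⊂ C ∧ X ⊆ K}).exists_maximal ⟨X, hX, h, Subset.rfl⟩
  refine ⟨K, ⟨hK1, hC, hK2, fun E hE h1 h2 => ?_⟩, hK3⟩
  by_contra hne
  exact h1.2 (hm ⟨hE, h2.ssubset_of_ne hne, hK3.trans h1.1⟩ h1.1)

theorem aux_dgen [Finite α] {x : α} {Z : Set α} (h1 : x ∈ φ Z) (h2 : x ∉ binPart φ Z) :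
    ∃ A, binPart φ A ⊆ binPart φ Z ∧ IsDGen φ x A := by
  obtain ⟨A, ⟨hA1, hA2⟩, hm⟩ := (Set.toFinite
    {A : Set α | x ∈ φ A ∧ binPart φ A ⊆ binPart φ Z}).exists_minimalFor (binPart φ) _
      ⟨Z, h1, Subset.rfl⟩
  refine ⟨A, hA2, hA1, fun h => h2 (hA2 h), fun B hB hx => ?_⟩
  exact hB.2 (hm ⟨hx, hB.1.trans hA2⟩ hB.1)

theorem aux_lower (hφ : IsClosureOp φ) (hstd : IsStandard φ) {D : Set α}
    (hD : IsClosedSet φ D) {z : α} (hz : z ∉ D) (hmod : ModularLattice φ) :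
    z ∉ φ (D ∪ φ {z} \ {z}) := by
  intro h
  have h1 := hmod (φ {z} \ {z}) (φ {z}) D (hstd z) (aux_cl hφ _) hD diff_subset
  have h2 : φ {z} ∩ D ∪ φ {z} \ {z} = φ {z} \ {z} := by
    apply union_eq_self_of_subset_left
    rintro y ⟨hy, hy'⟩
    refine ⟨hy, ?_⟩
    rintro rfl
    exact hz hy'
  rw [h2, hstd z] at h1
  have : z ∈ φ {z} \ {z} := by
    rw [h1]; exact ⟨aux_sub hφ _ rfl, h⟩
  exact this.2 rfl

theorem aux_D_sub (hφ : IsClosureOp φ) (hstd : IsStandard φ) (hmod : ModularLattice φ)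
    {C Ci Cj Ck : Set α} (hCi : Predecessor φ Ci C) (hCj : Predecessor φ Cj C)
    (hP : PseudoClosed φ (Ci ∪ Cj)) (hspan : φ (Ci ∪ Cj) = C)
    (hCk : Predecessor φ Ck C) : Ci ∩ Cj ⊆ Ck := by
  by_contra hnot
  have hD : IsClosedSet φ (Ci ∩ Cj) := aux_inter hφ hCi.1 hCj.1
  have hDC : Ci ∩ Cj ⊆ C := inter_subset_left.trans hCi.2.2.1.1
  have hC := hCi.2.1
  have hkD : φ (Ck ∪ Ci ∩ Cj) = C := aux_join hφ hCk hDC hnot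
  have hPC : Ci ∪ Cj ⊆ C := union_subset hCi.2.2.1.1 hCj.2.2.1.1
  -- any z outside P
  obtain ⟨z, hzC, hzP⟩ : ∃ z ∈ C, z ∉ Ci ∪ Cj := by
    by_contra hno
    push Not at hno
    exact hP.1 (hspan.trans (Subset.antisymm hno hPC))
  have hzi : z ∉ Ci := fun h => hzP (Or.inl h)
  have hzj : z ∉ Cj := fun h => hzP (Or.inr h)
  have hzD : z ∉ Ci ∩ Cj := fun h => hzi h.1
  have step : ∀ X, IsClosedSet φ X → φ (X ∪ Ci ∩ Cj) = C → ∀ K, Predecessor φ K C →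
      Ci ∩ Cj ⊆ K → φ (K ∩ X ∪ Ci ∩ Cj) = K := by
    intro X hX hXD K hK hDK
    rw [hmod _ K X hD hK.1 hX hDK, hXD, inter_eq_self_of_subset_left hK.2.2.1.1]
  have hgen : ∀ X Y, Y ⊆ X → IsClosedSet φ X → φ (X ∪ Ci ∩ Cj) = C → Ci ∩ X ⊆ Y →
      Cj ∩ X ⊆ Y → φ (Ci ∩ Cj ∪ Y) = C := by
    intro X Y hYX hX hXD h1 h2
    have hXC : X ⊆ C := by
      rw [← hXD]; exact subset_union_left.trans (aux_sub hφ _)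
    apply Subset.antisymm (aux_le hφ hC (union_subset hDC (hYX.trans hXC)))
    rw [← hspan]
    apply aux_le hφ (aux_cl hφ _)
    apply union_subset
    · refine (step X hX hXD Ci hCi inter_subset_left).symm.subset.trans ?_
      apply hφ.2.2
      exact union_subset (h1.trans subset_union_right) subset_union_left
    · refine (step X hX hXD Cj hCj inter_subset_right).symm.subset.trans ?_
      apply hφ.2.2
      exact union_subset (h2.trans subset_union_right) subset_union_left
  -- `w` is a proper closed subset
  have hwC : φ (φ {z} ∪ Ci ∩ Cj) ≠ C := by
    intro hw
    refine aux_lower hφ hstd hD hzD hmod ?_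
    rw [hgen (φ {z}) (φ {z} \ {z}) diff_subset (aux_cl hφ _) hw]
    · exact hzC
    · rintro y ⟨hy, hy'⟩
      exact ⟨hy', by rintro rfl; exact hzi hy⟩
    · rintro y ⟨hy, hy'⟩
      exact ⟨hy', by rintro rfl; exact hzj hy⟩
  -- Ck ⊆ P
  have hkP : Ck ⊆ Ci ∪ Cj := by
    have hab : Ci ∩ Ck ∪ Cj ∩ Ck ⊆ Ck := union_subset inter_subset_right inter_subset_right
    have habk : φ (Ci ∩ Ck ∪ Cj ∩ Ck) ⊆ Ck := aux_le hφ hCk.1 hab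
    have hsub := aux_sub hφ (Ci ∩ Ck ∪ Cj ∩ Ck)
    have h1 := hmod (φ (Ci ∩ Ck ∪ Cj ∩ Ck)) Ck (Ci ∩ Cj) (aux_cl hφ _) hCk.1 hD habk
    rw [hgen Ck _ habk hCk.1 hkD (subset_union_left.trans hsub)
      (subset_union_right.trans hsub), inter_eq_self_of_subset_left hCk.2.2.1.1,
      union_eq_self_of_subset_left, hφ.2.1] at h1
    · rw [← h1]
      apply hP.2.1
      · exact union_subset_union inter_subset_left inter_subset_left
      · rw [h1, hspan]; exact hCk.2.2.1
    · rintro y ⟨hy, hy'⟩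
      exact hsub (Or.inl ⟨hy'.1, hy⟩)
  set w := φ (φ {z} ∪ Ci ∩ Cj) with hwdef
  have hwcl : IsClosedSet φ w := aux_cl hφ _
  have hDw : Ci ∩ Cj ⊆ w := subset_union_right.trans (aux_sub hφ _)
  have hzw : z ∈ w := aux_sub hφ _ (Or.inl (aux_sub hφ _ rfl))
  have hwsub : w ⊆ C := aux_le hφ hC (union_subset (aux_single hφ hC hzC) hDC)
  have hww := hmod _ w Ck hD hwcl hCk.1 hDw
  rw [hkD, inter_eq_self_of_subset_left hwsub] at hww
  have hmeet : ∀ K, Predecessor φ K C → z ∉ K → ¬ K ⊆ w := by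
    intro K hK hzK h
    exact hwC (hK.2.2.2 w hwcl ⟨h, fun h' => hzK (h' hzw)⟩ hwsub)
  have hwi : w ∩ Ci ⊆ Ci ∩ Cj := by
    rcases aux_cover hφ hmod hCi hCj (aux_inter hφ hwcl hCi.1)
      (subset_inter hDw inter_subset_left) inter_subset_right with h | h
    · exact h.subset
    · exact absurd (h ▸ inter_subset_left) (hmeet Ci hCi hzi)
  have hwj : w ∩ Cj ⊆ Ci ∩ Cj := by
    rcases aux_cover hφ hmod hCj hCi (aux_inter hφ hwcl hCj.1)
      (by rw [inter_comm]; exact subset_inter hDw inter_subset_right)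
      inter_subset_right with h | h
    · rw [inter_comm Ci]; exact h.subset
    · exact absurd (h ▸ inter_subset_left) (hmeet Cj hCj hzj)
  have : w ⊆ Ci ∩ Cj := by
    rw [← hww]
    apply aux_le hφ hD
    apply union_subset _ Subset.rfl
    rintro y ⟨hy, hy'⟩
    rcases hkP hy' with h | h
    · exact hwi ⟨hy, h⟩
    · exact hwj ⟨hy, h⟩
  exact hzD (this hzw)

theorem aux_closed_imp (hφ : IsClosureOp φ) {C : Set α} (hC : IsClosedSet φ C) :
    ImpClosedSet (EBase φ) C := by
  rintro p (⟨a, x, rfl, hx, -⟩ | ⟨x, A, rfl, hA⟩) h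
  · exact singleton_subset_iff.2 (aux_le hφ hC h hx)
  · exact singleton_subset_iff.2 (aux_le hφ hC h hA.1.1)

end Helpers

/-- in a modular closure space, for a non-join-irreducible essential
set `C`, a pseudo-closed set of the form `Ci ∪ Cj` (union of two predecessors)
spanning `C` is faulty iff there is a third predecessor `Ck` with `|Ck \ C_*| > 1`. -/
theorem statement16 {α : Type*} [Fintype α] (φ : Set α → Set α)
    (hφ : IsClosureOp φ) (hstd : IsStandard φ) (hmod : ModularLattice φ)
    (C Ci Cj : Set α) (hess : Essential φ C) (hnji : ¬ JoinIrredUP φ C)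
    (hCi : Predecessor φ Ci C) (hCj : Predecessor φ Cj C)
    (hP : PseudoClosed φ (Ci ∪ Cj)) (hspan : φ (Ci ∪ Cj) = C) :
    ImpClosure (EBase φ) (Ci ∪ Cj) ⊂ C ↔
      ∃ Ck : Set α, Predecessor φ Ck C ∧ Ck ≠ Ci ∧ Ck ≠ Cj ∧
        1 < (Ck \ ⋂₀ {D : Set α | Predecessor φ D C}).ncard := by
  classical
  have hC := hCi.2.1
  set D := Ci ∩ Cj with hDdef
  have hD : IsClosedSet φ D := aux_inter hφ hCi.1 hCj.1
  have hPC : Ci ∪ Cj ⊆ C := union_subset hCi.2.2.1.1 hCj.2.2.1.1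
  have hDP : D ⊆ Ci ∪ Cj := inter_subset_left.trans subset_union_left
  have hij : Ci ≠ Cj := by
    rintro rfl
    apply hP.1
    rw [union_self]; exact hCi.1
  have hDK : ∀ K, Predecessor φ K C → D ⊆ K := fun K hK =>
    aux_D_sub hφ hstd hmod hCi hCj hP hspan hK
  have hstar : ⋂₀ {K : Set α | Predecessor φ K C} = D := by
    apply Subset.antisymm
    · exact subset_inter (sInter_subset_of_mem hCi) (sInter_subset_of_mem hCj)
    · exact subset_sInter hDK
  rw [hstar]
  -- Ci meets others in D
  have hKi : ∀ K, Predecessor φ K C → K ≠ Ci → K ∩ Ci = D := by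
    intro K hK hne
    rcases aux_cover hφ hmod hCi hCj (aux_inter hφ hK.1 hCi.1)
      (subset_inter (hDK K hK) inter_subset_left) inter_subset_right with h | h
    · exact h
    · exact absurd (aux_pred_eq hCi hK (h ▸ inter_subset_left)).symm hne
  have hcov : ∀ K, Predecessor φ K C → ∀ E, IsClosedSet φ E → D ⊆ E → E ⊆ K →
      E = D ∨ E = K := by
    intro K hK E hE h1 h2
    by_cases hKe : K = Ci
    · subst hKe
      exact aux_cover hφ hmod hCi hCj hE h1 h2
    · rw [← hKi K hK hKe] at h1 ⊢
      exact aux_cover hφ hmod hK hCi hE h1 h2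
  have hKL : ∀ K L, Predecessor φ K C → Predecessor φ L C → K ≠ L → K ∩ L ⊆ D := by
    intro K L hK hL hne
    rcases hcov K hK (K ∩ L) (aux_inter hφ hK.1 hL.1)
      (subset_inter (hDK K hK) (hDK L hL)) inter_subset_left with h | h
    · exact h.subset
    · exact absurd (aux_pred_eq hK hL (h ▸ inter_subset_right)) hne
  have hex : ∀ x ∈ C, ∃ K, Predecessor φ K C ∧ x ∈ K := by
    intro x hx
    have hlt : φ {x} ⊂ C := by
      refine (aux_single hφ hC hx).ssubset_of_ne fun h => ?_
      have hu : ∀ K, Predecessor φ K C → K = φ {x} \ {x} := by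
        intro K hK
        by_contra hne
        have hxK : x ∉ K := fun hxK =>
          hK.2.2.1.2 (h ▸ aux_single hφ hK.1 hxK)
        have hs : K ⊆ φ {x} \ {x} := by
          intro y hy
          refine ⟨h ▸ hK.2.2.1.1 hy, ?_⟩
          rintro rfl
          exact hxK hy
        have := hK.2.2.2 _ (hstd x) (hs.ssubset_of_ne hne) (h ▸ diff_subset)
        exact (this ▸ hx : x ∈ φ {x} \ {x}).2 rfl
      exact hij ((hu Ci hCi).trans (hu Cj hCj).symm)
    obtain ⟨K, hK, h⟩ := aux_exists_pred hC (aux_cl hφ _) hlt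
    exact ⟨K, hK, h (aux_sub hφ _ rfl)⟩
  have hlow : ∀ K, Predecessor φ K C → ∀ z ∈ K, z ∉ D → φ {z} \ {z} ⊆ D := by
    intro K hK z hz hzD
    have hzK := aux_single hφ hK.1 hz
    have hnot := aux_lower hφ hstd hD hzD hmod
    rcases hcov K hK (φ (D ∪ φ {z} \ {z})) (aux_cl hφ _)
      (subset_union_left.trans (aux_sub hφ _))
      (aux_le hφ hK.1 (union_subset (hDK K hK) (diff_subset.trans hzK))) with h | h
    · rw [← h]; exact subset_union_right.trans (aux_sub hφ _)
    · rw [h] at hnot; exact absurd hz hnot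
  have hbinC : ∀ X ⊆ C, ∀ X', (∀ y ∈ X, φ {y} ⊆ X') → binPart φ X ⊆ X' := by
    intro X _ X' h
    exact iUnion₂_subset h
  constructor
  · -- faulty implies a large third predecessor
    intro hlt
    by_contra hno
    push Not at hno
    apply hlt.2
    intro x hxC
    rintro Y ⟨hPY, hY⟩
    by_cases hxP : x ∈ Ci ∪ Cj
    · exact hPY hxP
    obtain ⟨K, hK, hxK⟩ := hex x hxC
    have hcard := hno K hK (by rintro rfl; exact hxP (Or.inl hxK))
      (by rintro rfl; exact hxP (Or.inr hxK))
    have hxD : x ∉ D := fun h => hxP (hDP h)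
    have huniq : ∀ y ∈ K, y ≠ x → y ∈ D := by
      intro y hy hne
      by_contra hyD
      exact hne ((Set.ncard_le_one (Set.toFinite _)).1 hcard y ⟨hy, hyD⟩ x ⟨hxK, hxD⟩)
    have hbP : binPart φ (Ci ∪ Cj) ⊆ Ci ∪ Cj := by
      apply iUnion₂_subset
      rintro y (hy | hy)
      · exact (aux_single hφ hCi.1 hy).trans subset_union_left
      · exact (aux_single hφ hCj.1 hy).trans subset_union_right
    obtain ⟨A, hA1, hA2⟩ := aux_dgen (x := x) (Z := Ci ∪ Cj) (φ := φ) (hspan.symm ▸ hxC)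
      (fun h => hxP (hbP h))
    have hAP : A ⊆ Ci ∪ Cj := (aux_bin_sub hφ A).trans (hA1.trans hbP)
    have hAC : φ A ⊆ C := aux_le hφ hC (hAP.trans hPC)
    have hE : IsEGen φ x A := by
      refine ⟨hA2, fun B hB hBA => Subset.antisymm hBA ?_⟩
      by_cases hBC : φ B = C
      · rw [hBC]; exact hAC
      exfalso
      obtain ⟨L, hL, hBL⟩ := aux_exists_pred hC (aux_cl hφ B)
        ((hBA.trans hAC).ssubset_of_ne hBC)
      by_cases hLK : L = K
      · subst hLK
        apply hxD
        refine aux_le hφ hD (fun y hy => huniq y (hBL (aux_sub hφ _ hy)) ?_) hB.1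
        rintro rfl
        exact hB.2.1 (aux_bin_sub hφ B hy)
      · exact hxD (hKL L K hL hK hLK ⟨hBL hB.1, hxK⟩)
    exact hY (A, {x}) (Or.inr ⟨x, A, rfl, hE⟩) (hAP.trans hPY) rfl
  · rintro ⟨K, hK, hKi', hKj', hcard⟩
    have hsubC : ImpClosure (EBase φ) (Ci ∪ Cj) ⊆ C :=
      sInter_subset_of_mem ⟨hPC, aux_closed_imp hφ hC⟩
    obtain ⟨x₀, hx₀, -⟩ := (Set.one_lt_ncard (Set.toFinite _)).1 hcard
    have hYmem : ImpClosedSet (EBase φ) (C \ (K \ D)) := by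
      rintro p (⟨a, x, rfl, hx, hxa⟩ | ⟨x, A, rfl, hA⟩) h
      · have haY : a ∈ C \ (K \ D) := h rfl
        refine singleton_subset_iff.2 ⟨aux_single hφ hC haY.1 hx, fun hxK => ?_⟩
        obtain ⟨L, hL, haL⟩ := hex a haY.1
        by_cases hLK : L = K
        · subst hLK
          have haD : a ∈ D := by
            by_contra haD
            exact haY.2 ⟨haL, haD⟩
          exact hxK.2 (aux_single hφ hD haD hx)
        · exact hxK.2 (hKL L K hL hK hLK ⟨aux_single hφ hL.1 haL hx, hxK.1⟩)
      · have hAY : A ⊆ C \ (K \ D) := h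
        have hAC : φ A ⊆ C := aux_le hφ hC (hAY.trans diff_subset)
        refine singleton_subset_iff.2 ⟨hAC hA.1.1, fun hxK => ?_⟩
        have hAeq : φ A = C := by
          by_contra hne
          obtain ⟨L, hL, hAL⟩ := aux_exists_pred hC (aux_cl hφ A) (hAC.ssubset_of_ne hne)
          by_cases hLK : L = K
          · subst hLK
            apply hxK.2
            refine aux_le hφ hD (fun y hy => ?_) hA.1.1
            by_contra hyD
            exact (hAY hy).2 ⟨hAL (aux_sub hφ _ hy), hyD⟩
          · exact hxK.2 (hKL L K hL hK hLK ⟨hAL hA.1.1, hxK.1⟩)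
        obtain ⟨z, hz, hzx⟩ := Set.exists_ne_of_one_lt_ncard hcard x
        have hZK : insert z D ⊆ K := insert_subset hz.1 (hDK K hK)
        have hbZ : binPart φ (insert z D) ⊆ insert z D := by
          apply iUnion₂_subset
          rintro y (rfl | hy)
          · intro t ht
            by_cases hty : t = y
            · exact Or.inl hty
            · exact Or.inr (hlow K hK y hz.1 hz.2 ⟨ht, hty⟩)
          · exact (aux_single hφ hD hy).trans (subset_insert _ _)
        have hZeq : φ (insert z D) = K := by
          rcases hcov K hK (φ (insert z D)) (aux_cl hφ _)
            ((subset_insert _ _).trans (aux_sub hφ _)) (aux_le hφ hK.1 hZK) with h' | h'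
          · exact absurd (h' ▸ aux_sub hφ _ (mem_insert z D)) hz.2
          · exact h'
        obtain ⟨B, hB1, hB2⟩ := aux_dgen (x := x) (Z := insert z D) (φ := φ)
          (hZeq.symm ▸ hxK.1) (by
            intro hx
            rcases hbZ hx with h' | h'
            · exact hzx h'.symm
            · exact hxK.2 h')
        have hBK : φ B ⊆ K :=
          aux_le hφ hK.1 ((aux_bin_sub hφ B).trans (hB1.trans (hbZ.trans hZK)))
        have := hA.2 B hB2 (by rw [hAeq]; exact hBK.trans hK.2.2.1.1)
        rw [hAeq] at this
        rw [this] at hBK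
        exact hK.2.2.1.2 hBK
    refine ⟨hsubC, fun hle => ?_⟩
    have hPY : Ci ∪ Cj ⊆ C \ (K \ D) := by
      intro y hy
      refine ⟨hPC hy, fun hyK => hyK.2 ?_⟩
      rcases hy with hy | hy
      · exact hKL K Ci hK hCi hKi' ⟨hyK.1, hy⟩
      · exact hKL K Cj hK hCj hKj' ⟨hyK.1, hy⟩
    have : x₀ ∈ C \ (K \ D) := hle (hK.2.2.1.1 hx₀.1) _ ⟨hPY, hYmem⟩
    exact this.2 hx₀

end EBaseFormal
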